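/- arXiv:1611.07555 — 5 statements merged into one kernel-verified Lean document; each statement's English description precedes it below -/
import Mathlib

section
/- Let d ≥ 1 and 1 ≤ k ≤ d be integers, let x : Fin d → ℝ, and let μ ∈ ℝ. Then for every j ∈ Fin d, (1 / C(d, k)) · Σ_{σ ⊆ Fin d, |σ| = k} ((if j ∈ σ then (d/k)·x(j) − ((d − k)/k)·μ else μ) − x(j))² = ((d − k)/k)·(x(j) − μ)², where C(d, k) is the binomial coefficient and the sum ranges over all k-element subsets of Fin d. -/
/-!
If `j ∈ σ`, the deviation at `j` is `((d - k) / k) * (x j - μ)`; otherwise it is `μ - x j`.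
A uniformly random `k`-subset contains `j` with probability `k / d`, by
`mul_card_powersetCard_filter_mem`, so the mean square is
`((k / d) * ((d - k) / k) ^ 2 + (d - k) / d) * (x j - μ) ^ 2`,
whose leading factor simplifies to `(d - k) / k`.
-/

/-- The inclusion probability `k / d` of a point in a uniformly random `k`-subset,
with denominators cleared. -/
lemma mul_card_powersetCard_filter_mem (d k : ℕ) (hk : 1 ≤ k) (j : Fin d) :
    d * ((Finset.powersetCard k (Finset.univ : Finset (Fin d))).filter (j ∈ ·)).card
      = d.choose k * k := by
  have hcard := Finset.card_filter_powersetCard_subset {j} (Finset.univ : Finset (Fin d)) k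
    (Finset.subset_univ _) (by simpa using hk)
  simp only [Finset.singleton_subset_iff, Finset.card_univ, Fintype.card_fin,
    Finset.card_singleton] at hcard
  rw [hcard]
  obtain ⟨m, rfl⟩ : ∃ m, d = m + 1 := ⟨d - 1, by have := j.pos; omega⟩
  obtain ⟨l, rfl⟩ : ∃ l, k = l + 1 := ⟨k - 1, by omega⟩
  exact Nat.add_one_mul_choose_eq m l

/-- Per-coordinate second moment of the fixed-size-support encoder: the expected
squared deviation of the encoded coordinate `j` from `x j`, averaged uniformly over
all `k`-element subsets of `Fin d`, equals `((d − k)/k)·(x j − μ)²`. -/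
theorem fixed_size_support_second_moment
    (d k : ℕ) (hd : 1 ≤ d) (hk1 : 1 ≤ k) (hkd : k ≤ d)
    (x : Fin d → ℝ) (μ : ℝ) (j : Fin d) :
    (1 / (Nat.choose d k : ℝ)) *
      ∑ σ ∈ Finset.powersetCard k (Finset.univ : Finset (Fin d)),
        ((if j ∈ σ then (d : ℝ) / k * x j - ((d : ℝ) - k) / k * μ else μ) - x j) ^ 2
      = (((d : ℝ) - k) / k) * (x j - μ) ^ 2 := by
  have hk0 : (k : ℝ) ≠ 0 := by positivity
  have hd0 : (d : ℝ) ≠ 0 := by positivity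
  have hC : (d.choose k : ℝ) ≠ 0 := by exact_mod_cast (Nat.choose_pos hkd).ne'
  have hterm : ∀ σ : Finset (Fin d),
      ((if j ∈ σ then (d : ℝ) / k * x j - ((d : ℝ) - k) / k * μ else μ) - x j) ^ 2
        = (x j - μ) ^ 2
          + if j ∈ σ then ((((d : ℝ) - k) / k) ^ 2 - 1) * (x j - μ) ^ 2 else 0 := by
    intro σ
    split_ifs
    · field_simp
      ring
    · ring
  have hN : ((Finset.powersetCard k (Finset.univ : Finset (Fin d))).filter (j ∈ ·)).card
      = (d.choose k : ℝ) * k / d := by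
    rw [eq_div_iff hd0, mul_comm]
    exact_mod_cast mul_card_powersetCard_filter_mem d k hk1 j
  simp_rw [hterm]
  rw [Finset.sum_add_distrib, ← Finset.sum_filter, Finset.sum_const, Finset.sum_const,
    Finset.card_powersetCard, Finset.card_univ, Fintype.card_fin, nsmul_eq_mul, nsmul_eq_mul, hN]
  field_simp
  ring
end

section
/- Let d be a positive integer and x ∈ ℝ^d, and let m = min_j x(j) and M = max_j x(j). Then Σ_{j=1}^d (M − x(j))·(x(j) − m) ≤ (d/2)·‖x‖², where ‖·‖ is the Euclidean norm on ℝ^d. -/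
/-!
By AM-GM each summand `(M - x j) * (x j - m)` is at most `(M - m)² / 4`, and
`(M - m)² ≤ 2 (M² + m²)`. If `m` and `M` are attained at distinct indices, then
`M² + m² ≤ ‖x‖²`; otherwise `M - m = 0`. Either way each of the `d` summands is at most `‖x‖² / 2`.
-/

/-- Key deterministic inequality for the MSE bound of binary quantization:
`Σⱼ (M − x(j))·(x(j) − m) ≤ (d/2)·‖x‖²`, where `m` and `M` are the minimum and
maximum entries of `x`. -/
theorem binary_quantization_bound
    (d : ℕ) (hd : 0 < d) (x : EuclideanSpace ℝ (Fin d)) (m M : ℝ)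
    (hm : IsLeast (Set.range x) m)
    (hM : IsGreatest (Set.range x) M) :
    ∑ j, (M - x j) * (x j - m) ≤ ((d : ℝ) / 2) * ‖x‖ ^ 2 := by
  obtain ⟨⟨a, rfl⟩, -⟩ := hm
  obtain ⟨⟨b, rfl⟩, -⟩ := hM
  -- Both extremes are entries of `x`; at a common index the difference is zero.
  have key : (x b - x a) ^ 2 ≤ 2 * ‖x‖ ^ 2 := by
    by_cases hab : a = b
    · subst hab
      simp
    · have hpair : x a ^ 2 + x b ^ 2 ≤ ‖x‖ ^ 2 := by
        rw [EuclideanSpace.real_norm_sq_eq, ← Finset.sum_pair (f := fun i => x i ^ 2) hab]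
        exact Finset.sum_le_sum_of_subset_of_nonneg (Finset.subset_univ _)
          fun i _ _ => sq_nonneg (x i)
      nlinarith [sq_nonneg (x a + x b)]
  -- AM-GM: each summand is at most `(M - m)² / 4`.
  have hterm : ∀ j, (x b - x j) * (x j - x a) ≤ ‖x‖ ^ 2 / 2 := fun j => by
    nlinarith [sq_nonneg ((x b - x j) - (x j - x a))]
  calc ∑ j, (x b - x j) * (x j - x a) ≤ ∑ _j : Fin d, ‖x‖ ^ 2 / 2 :=
        Finset.sum_le_sum fun j _ => hterm j
    _ = (d : ℝ) / 2 * ‖x‖ ^ 2 := by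
        simp only [Finset.sum_const, Finset.card_univ, Fintype.card_fin, nsmul_eq_mul]
        ring
end

section
/- Let S be a nonempty finite set, let a : S → ℝ with a_s > 0 for all s ∈ S, let B > 0 be real, and let W = Σ_{s∈S} a_s. Then for every p : S → ℝ with 0 < p_s ≤ 1 for all s and Σ_{s∈S} p_s ≤ B, one has Σ_{s∈S} (1/p_s − 1)·a_s² ≥ W²/B − Σ_{s∈S} a_s². -/
/-- Lower bound for the MSE-optimal protocol problem: any feasible probability vector
satisfies `Σ (1/p_s − 1)·a_s² ≥ W²/B − Σ a_s²`, where `W = Σ a_s`. -/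
theorem mse_lower_bound_W
    {ι : Type*} (S : Finset ι) (hS : S.Nonempty)
    (a : ι → ℝ) (ha : ∀ s ∈ S, 0 < a s)
    (B : ℝ) (hB0 : 0 < B)
    (p : ι → ℝ) (hp : ∀ s ∈ S, 0 < p s ∧ p s ≤ 1) (hpB : ∑ s ∈ S, p s ≤ B) :
    (∑ s ∈ S, a s) ^ 2 / B - ∑ s ∈ S, (a s) ^ 2
      ≤ ∑ s ∈ S, (1 / p s - 1) * (a s) ^ 2 := by
  have hp0 : 0 < ∑ s ∈ S, p s := Finset.sum_pos (fun s hs => (hp s hs).1) hS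
  have h1 : (∑ s ∈ S, a s) ^ 2 / B ≤ (∑ s ∈ S, a s) ^ 2 / ∑ s ∈ S, p s :=
    div_le_div_of_nonneg_left (sq_nonneg _) hp0 hpB
  -- Cauchy–Schwarz in Engel (Sedrakyan) form
  have h2 : (∑ s ∈ S, a s) ^ 2 / ∑ s ∈ S, p s ≤ ∑ s ∈ S, a s ^ 2 / p s :=
    Finset.sq_sum_div_le_sum_sq_div S a fun s hs => (hp s hs).1
  have h3 : ∑ s ∈ S, (1 / p s - 1) * (a s) ^ 2
      = ∑ s ∈ S, a s ^ 2 / p s - ∑ s ∈ S, a s ^ 2 := by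
    rw [← Finset.sum_sub_distrib]
    exact Finset.sum_congr rfl fun s _ => by ring
  linarith
end

section
/- Let S be a nonempty finite set, let a : S → ℝ with a_s > 0 for all s ∈ S, and let B > 0 be real. Then for every p : S → ℝ with 0 < p_s ≤ 1 for all s and Σ_{s∈S} p_s ≤ B, one has Σ_{s∈S} (1/p_s − 1)·a_s² ≥ (1/B − 1)·Σ_{s∈S} a_s². -/
/-- Lower bound for the MSE-optimal protocol problem: any feasible probability vector
satisfies `Σ (1/p_s − 1)·a_s² ≥ (1/B − 1)·Σ a_s²`. -/
theorem mse_lower_bound_B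
    {ι : Type*} (S : Finset ι) (hS : S.Nonempty)
    (a : ι → ℝ) (ha : ∀ s ∈ S, 0 < a s)
    (B : ℝ) (hB0 : 0 < B)
    (p : ι → ℝ) (hp : ∀ s ∈ S, 0 < p s ∧ p s ≤ 1) (hpB : ∑ s ∈ S, p s ≤ B) :
    (1 / B - 1) * ∑ s ∈ S, (a s) ^ 2 ≤ ∑ s ∈ S, (1 / p s - 1) * (a s) ^ 2 := by
  rw [Finset.mul_sum]
  refine Finset.sum_le_sum fun s hs => ?_
  -- The inequality holds term by term, since each single probability is already at most `B`.
  have hsB : p s ≤ B :=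
    (Finset.single_le_sum (fun t ht => (hp t ht).1.le) hs).trans hpB
  have hinv : 1 / B ≤ 1 / p s := one_div_le_one_div_of_le (hp s hs).1 hsB
  exact mul_le_mul_of_nonneg_right (by linarith) (sq_nonneg _)
end

section
/- Let S be a nonempty finite set, let a : S → ℝ with a_s > 0 for all s ∈ S, let W = Σ_{s∈S} a_s, and let B be a real number with 0 < B ≤ W / (max_{s∈S} a_s). Define p_s = a_s·B/W for s ∈ S. Then p is feasible, i.e. 0 < p_s ≤ 1 for all s and Σ_{s∈S} p_s = B; moreover Σ_{s∈S} (1/p_s − 1)·a_s² = W²/B − Σ_{s∈S} a_s², and for every feasible q : S → ℝ (i.e. 0 < q_s ≤ 1 and Σ_{s∈S} q_s ≤ B) one has Σ_{s∈S} (1/p_s − 1)·a_s² ≤ Σ_{s∈S} (1/q_s − 1)·a_s². In particular, the minimum of the objective over feasible probability vectors equals W²/B − Σ_{s∈S} a_s². -/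
/-!
Every objective value has the form `∑ a_s² / q_s - ∑ a_s²`, so only the first sum matters.
Sedrakyan's form of the Cauchy–Schwarz inequality (`Finset.sq_sum_div_le_sum_sq_div`) gives
`∑ a_s² / q_s ≥ (∑ a_s)² / ∑ q_s ≥ W² / B` for every feasible `q`, and the choice `p_s = a_s B / W`
turns each term `a_s² / p_s` into `a_s W / B`, so that it attains this bound. The hypothesis
`B ≤ W / max a_s` is exactly what keeps `p_s ≤ 1`.
-/


/-- Exact optimality in the low-communication regime `B ≤ W / max a_s`:
the probabilities `p_s = a_s·B/W` are feasible, attain objective value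
`W²/B − Σ a_s²`, and minimize the objective over all feasible choices. -/
theorem mse_optimal_probabilities
    {ι : Type*} (S : Finset ι) (hS : S.Nonempty)
    (a : ι → ℝ) (ha : ∀ s ∈ S, 0 < a s)
    (B : ℝ) (hB0 : 0 < B)
    (hBmax : B ≤ (∑ s ∈ S, a s) / S.sup' hS a)
    (p : ι → ℝ) (hp : ∀ s ∈ S, p s = a s * B / (∑ t ∈ S, a t)) :
    (∀ s ∈ S, 0 < p s ∧ p s ≤ 1) ∧ (∑ s ∈ S, p s = B) ∧
    (∑ s ∈ S, (1 / p s - 1) * (a s) ^ 2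
      = (∑ s ∈ S, a s) ^ 2 / B - ∑ s ∈ S, (a s) ^ 2) ∧
    (∀ q : ι → ℝ, (∀ s ∈ S, 0 < q s ∧ q s ≤ 1) → (∑ s ∈ S, q s ≤ B) →
      ∑ s ∈ S, (1 / p s - 1) * (a s) ^ 2 ≤ ∑ s ∈ S, (1 / q s - 1) * (a s) ^ 2) := by
  have hWpos : 0 < ∑ s ∈ S, a s := Finset.sum_pos ha hS
  have expand : ∀ q : ι → ℝ, ∑ s ∈ S, (1 / q s - 1) * (a s) ^ 2
      = ∑ s ∈ S, (a s) ^ 2 / q s - ∑ s ∈ S, (a s) ^ 2 := by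
    intro q
    rw [← Finset.sum_sub_distrib]
    exact Finset.sum_congr rfl fun s _ => by ring
  have value : ∑ s ∈ S, (1 / p s - 1) * (a s) ^ 2
      = (∑ s ∈ S, a s) ^ 2 / B - ∑ s ∈ S, (a s) ^ 2 := by
    have term : ∀ s ∈ S, (a s) ^ 2 / p s = a s * ((∑ t ∈ S, a t) / B) := by
      intro s hs
      have h := ha s hs
      rw [hp s hs]
      field_simp
    rw [expand, Finset.sum_congr rfl term, ← Finset.sum_mul]
    ring
  refine ⟨fun s hs => ?_, ?_, value, fun q hq hqB => ?_⟩
  · have has := ha s hs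
    have hle : a s ≤ S.sup' hS a := Finset.le_sup' a hs
    rw [hp s hs]
    refine ⟨by positivity, (div_le_one hWpos).2 ?_⟩
    rw [le_div_iff₀ (has.trans_le hle)] at hBmax
    nlinarith
  · rw [Finset.sum_congr rfl hp, ← Finset.sum_div, ← Finset.sum_mul]
    field_simp
  · rw [value, expand]
    have hqpos : 0 < ∑ s ∈ S, q s := Finset.sum_pos (fun s hs => (hq s hs).1) hS
    have hbudget : (∑ s ∈ S, a s) ^ 2 / B ≤ (∑ s ∈ S, a s) ^ 2 / ∑ s ∈ S, q s := by gcongr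
    have hcs := Finset.sq_sum_div_le_sum_sq_div S a fun s hs => (hq s hs).1
    linarith
end
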